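/- arXiv:2310.04605 — 3 statements merged into one kernel-verified Lean document; each statement's English description precedes it below -/
import Mathlib

section
/- Let Φ : ℝⁿ → ℝ and f : ℝⁿ → ℝ be convex functions. Let b₁, …, b_N ∈ ℝⁿ, z₁, …, z_N ∈ ℝ and y₁, …, y_N ∈ ℝⁿ be such that for every i ∈ {1, …, N}: f(bᵢ) = Φ(bᵢ) = zᵢ, and yᵢ is a subgradient of f at bᵢ and also a subgradient of Φ at bᵢ. Then for every b in B = conv{b₁, …, b_N}, |f(b) − Φ(b)| ≤ (maxᵢ ‖yᵢ‖) · diam(B). -/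
open scoped RealInnerProductSpace

/-- One-sided bound: the maximum principle for `f` on the hull plus the subgradient
inequality for `g` at the data points. -/
theorem icnn_one_sided {n N : ℕ}
    (g f : EuclideanSpace ℝ (Fin n) → ℝ) (hf : ConvexOn ℝ Set.univ f)
    (b y : Fin N → EuclideanSpace ℝ (Fin n))
    (hfg : ∀ i, f (b i) = g (b i))
    (hy : ∀ i, ∀ b' : EuclideanSpace ℝ (Fin n), g (b i) + ⟪y i, b' - b i⟫ ≤ g b')
    (x : EuclideanSpace ℝ (Fin n)) (hx : x ∈ convexHull ℝ (Set.range b)) :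
    f x - g x ≤ (⨆ i, ‖y i‖) * Metric.diam (convexHull ℝ (Set.range b)) := by
  obtain ⟨_, ⟨i, rfl⟩, hi⟩ :=
    (hf.subset (Set.subset_univ _) (convex_convexHull ℝ (Set.range b))).exists_ge_of_mem_convexHull
      (subset_convexHull ℝ (Set.range b)) hx
  have hbd : Bornology.IsBounded (convexHull ℝ (Set.range b)) :=
    (isBounded_convexHull).2 (Set.finite_range b).isBounded
  have hd : ‖x - b i‖ ≤ Metric.diam (convexHull ℝ (Set.range b)) := by
    rw [← dist_eq_norm]
    exact Metric.dist_le_diam_of_mem hbd hx (subset_convexHull ℝ _ ⟨i, rfl⟩)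
  have hM : ‖y i‖ ≤ ⨆ i, ‖y i‖ :=
    le_ciSup (f := fun i => ‖y i‖) (Set.finite_range _).bddAbove i
  have h1 := hy i x
  have h2 := (abs_le.1 (abs_real_inner_le_norm (y i) (x - b i))).1
  have h3 := mul_le_mul hM hd (norm_nonneg _) ((norm_nonneg _).trans hM)
  have h4 := hfg i
  linarith

/-- **Theorem 2 of the paper** (perfect-fit generalization bound for ICNNs).
If the convex function `f` (the ICNN) perfectly fits the convex value function `Φ`
on the data points `b i` (matching values `z i` and sharing subgradients `y i`),
then on the convex hull `B` of the data points, `|f - Φ| ≤ (max_i ‖y i‖) * diam B`. -/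
theorem icnn_perfect_fit_generalization_bound
    {n N : ℕ} (hN : 0 < N)
    (Φ f : EuclideanSpace ℝ (Fin n) → ℝ)
    (hΦ : ConvexOn ℝ Set.univ Φ) (hf : ConvexOn ℝ Set.univ f)
    (b : Fin N → EuclideanSpace ℝ (Fin n))
    (z : Fin N → ℝ)
    (y : Fin N → EuclideanSpace ℝ (Fin n))
    (hfz : ∀ i, f (b i) = z i) (hΦz : ∀ i, Φ (b i) = z i)
    (hyf : ∀ i, ∀ b' : EuclideanSpace ℝ (Fin n), f (b i) + ⟪y i, b' - b i⟫ ≤ f b')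
    (hyΦ : ∀ i, ∀ b' : EuclideanSpace ℝ (Fin n), Φ (b i) + ⟪y i, b' - b i⟫ ≤ Φ b') :
    ∀ x ∈ convexHull ℝ (Set.range b),
      |f x - Φ x| ≤ (⨆ i, ‖y i‖) * Metric.diam (convexHull ℝ (Set.range b)) := by
  intro x hx
  have h1 := icnn_one_sided Φ f hf b y (fun i => (hfz i).trans (hΦz i).symm) hyΦ x hx
  have h2 := icnn_one_sided f Φ hΦ b y (fun i => (hΦz i).trans (hfz i).symm) hyf x hx
  exact abs_le.2 ⟨by linarith, h1⟩
end

section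
/- Let Φ : ℝⁿ → ℝ and f : ℝⁿ → ℝ be convex functions, and let b₁, …, b_N ∈ ℝⁿ, z₁, …, z_N ∈ ℝ, y₁, …, y_N ∈ ℝⁿ satisfy, for every i: f(bᵢ) = Φ(bᵢ) = zᵢ and yᵢ is a subgradient of both f and Φ at bᵢ. Then for every nonempty subset S ⊆ {1, …, N} and every b ∈ conv{bᵢ : i ∈ S}, |f(b) − Φ(b)| ≤ (max_{i ∈ S} ‖yᵢ‖) · diam(conv{bᵢ : i ∈ S}). -/
open scoped RealInnerProductSpace

/-- Remark after Theorem 2 of the paper: the perfect-fit generalization bound applies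
to any nonempty subset `S` of the data points, yielding tighter guarantees over
smaller domains. -/
theorem icnn_perfect_fit_generalization_bound_subset
    {n N : ℕ}
    (Φ f : EuclideanSpace ℝ (Fin n) → ℝ)
    (hΦ : ConvexOn ℝ Set.univ Φ) (hf : ConvexOn ℝ Set.univ f)
    (b : Fin N → EuclideanSpace ℝ (Fin n))
    (z : Fin N → ℝ)
    (y : Fin N → EuclideanSpace ℝ (Fin n))
    (hfz : ∀ i, f (b i) = z i) (hΦz : ∀ i, Φ (b i) = z i)
    (hyf : ∀ i, ∀ b' : EuclideanSpace ℝ (Fin n), f (b i) + ⟪y i, b' - b i⟫ ≤ f b')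
    (hyΦ : ∀ i, ∀ b' : EuclideanSpace ℝ (Fin n), Φ (b i) + ⟪y i, b' - b i⟫ ≤ Φ b') :
    ∀ S : Finset (Fin N), ∀ hS : S.Nonempty,
      ∀ x ∈ convexHull ℝ (b '' ↑S),
        |f x - Φ x| ≤ (S.sup' hS fun i => ‖y i‖) * Metric.diam (convexHull ℝ (b '' ↑S)) := by
  intro S hS x hx
  have hbd : Bornology.IsBounded (convexHull ℝ (b '' ↑S)) :=
    isBounded_convexHull.2 (S.finite_toSet.image b).isBounded
  have key : ∀ i ∈ S, -⟪y i, x - b i⟫ ≤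
      (S.sup' hS fun i => ‖y i‖) * Metric.diam (convexHull ℝ (b '' ↑S)) := by
    intro i hi
    have h1 : ‖y i‖ ≤ S.sup' hS fun i => ‖y i‖ := Finset.le_sup' (fun i => ‖y i‖) hi
    have hmem : b i ∈ convexHull ℝ (b '' ↑S) :=
      subset_convexHull ℝ _ (Set.mem_image_of_mem b hi)
    have h2 : ‖x - b i‖ ≤ Metric.diam (convexHull ℝ (b '' ↑S)) := by
      rw [← dist_eq_norm]
      exact Metric.dist_le_diam_of_mem hbd hx hmem
    have h3 := abs_real_inner_le_norm (y i) (x - b i)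
    have h4 := neg_le_abs (⟪y i, x - b i⟫)
    have h5 := mul_le_mul h1 h2 (norm_nonneg _) ((norm_nonneg _).trans h1)
    linarith
  obtain ⟨_, ⟨i, hi, rfl⟩, h1⟩ := hf.exists_ge_of_mem_convexHull (Set.subset_univ _) hx
  obtain ⟨_, ⟨j, hj, rfl⟩, h2⟩ := hΦ.exists_ge_of_mem_convexHull (Set.subset_univ _) hx
  have h3 := key i hi
  have h4 := key j hj
  have h5 := hyΦ i x
  have h6 := hyf j x
  have := hfz i
  have := hfz j
  have := hΦz i
  have := hΦz j
  rw [abs_le]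
  constructor <;> linarith
end

section
/- Let Φ : ℝⁿ → ℝ and f : ℝⁿ → ℝ be convex functions and b₁, …, b_N ∈ ℝⁿ. Set zᵢ = Φ(bᵢ), z̃ᵢ = f(bᵢ), let yᵢ be a subgradient of Φ at bᵢ and ỹᵢ a subgradient of f at bᵢ. On B = conv{b₁, …, b_N} define f̌(b) = maxᵢ (z̃ᵢ + ⟨ỹᵢ, b − bᵢ⟩), f̂(b) = inf{Σᵢ λᵢ z̃ᵢ : λ ≥ 0, Σᵢ λᵢ = 1, Σᵢ λᵢ bᵢ = b}, and analogously Φ̌(b) = maxᵢ (zᵢ + ⟨yᵢ, b − bᵢ⟩), Φ̂(b) = inf{Σᵢ λᵢ zᵢ : λ ≥ 0, Σᵢ λᵢ = 1, Σᵢ λᵢ bᵢ = b}. Then the constant M := sup_{b ∈ B} max(f̂(b) − Φ̌(b), Φ̂(b) − f̌(b)) is finite, depends only on the data {(bᵢ, zᵢ, yᵢ, z̃ᵢ, ỹᵢ)}, and satisfies |f(b) − Φ(b)| ≤ M for all b ∈ B. -/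
open scoped RealInnerProductSpace

/-- The piecewise-affine lower envelope `ǧ(x) = maxᵢ (zᵢ + ⟪yᵢ, x − bᵢ⟫)`. -/
noncomputable def lowerEnvelope {n N : ℕ}
    (b y : Fin N → EuclideanSpace ℝ (Fin n)) (z : Fin N → ℝ)
    (x : EuclideanSpace ℝ (Fin n)) : ℝ :=
  ⨆ i, (z i + ⟪y i, x - b i⟫)

/-- The convex-combination upper envelope
`ĝ(x) = inf { Σᵢ λᵢ zᵢ : λ ≥ 0, Σᵢ λᵢ = 1, Σᵢ λᵢ bᵢ = x }`. -/
noncomputable def upperEnvelope {n N : ℕ}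
    (b : Fin N → EuclideanSpace ℝ (Fin n)) (z : Fin N → ℝ)
    (x : EuclideanSpace ℝ (Fin n)) : ℝ :=
  sInf {r | ∃ lam : Fin N → ℝ, (∀ i, 0 ≤ lam i) ∧ (∑ i, lam i) = 1 ∧
      (∑ i, lam i • b i) = x ∧ r = ∑ i, lam i * z i}

theorem exists_weights_aux {n N : ℕ} (b : Fin N → EuclideanSpace ℝ (Fin n))
    (x : EuclideanSpace ℝ (Fin n)) (hx : x ∈ convexHull ℝ (Set.range b)) :
    ∃ lam : Fin N → ℝ, (∀ i, 0 ≤ lam i) ∧ (∑ i, lam i) = 1 ∧ (∑ i, lam i • b i) = x := by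
  refine convexHull_min (t := {x | ∃ lam : Fin N → ℝ, (∀ i, 0 ≤ lam i) ∧ (∑ i, lam i) = 1 ∧
    (∑ i, lam i • b i) = x}) ?_ ?_ hx
  · rintro _ ⟨i, rfl⟩
    refine ⟨Pi.single i 1, fun j => ?_, by simp, ?_⟩
    · by_cases h : j = i
      · subst h; simp
      · simp [h]
    · rw [Finset.sum_eq_single i] <;> simp +contextual
  · rintro u ⟨l, hl, hl1, rfl⟩ v ⟨m, hm, hm1, rfl⟩ s t hs ht hst
    refine ⟨fun i => s * l i + t * m i, fun i => ?_, ?_, ?_⟩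
    · have := hl i
      have := hm i
      positivity
    · rw [Finset.sum_add_distrib, ← Finset.mul_sum, ← Finset.mul_sum, hl1, hm1]
      linarith
    · simp only [add_smul, mul_smul, Finset.sum_add_distrib, Finset.smul_sum]

theorem lower_le_aux {n N : ℕ} [Nonempty (Fin N)] (g : EuclideanSpace ℝ (Fin n) → ℝ)
    (b y : Fin N → EuclideanSpace ℝ (Fin n)) (z : Fin N → ℝ) (hz : ∀ i, z i = g (b i))
    (hy : ∀ i, ∀ b' : EuclideanSpace ℝ (Fin n), g (b i) + ⟪y i, b' - b i⟫ ≤ g b')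
    (x : EuclideanSpace ℝ (Fin n)) : lowerEnvelope b y z x ≤ g x :=
  ciSup_le fun i => by rw [hz]; exact hy i x

theorem le_lower_aux {n N : ℕ} [Nonempty (Fin N)]
    (b y : Fin N → EuclideanSpace ℝ (Fin n)) (z : Fin N → ℝ) :
    ∃ C : ℝ, ∀ x ∈ convexHull ℝ (Set.range b), C ≤ lowerEnvelope b y z x := by
  obtain ⟨i⟩ := ‹Nonempty (Fin N)›
  have hc : IsCompact (convexHull ℝ (Set.range b)) :=
    (Set.finite_range b).isCompact_convexHull ℝ
  have hcont : ContinuousOn (fun x => z i + ⟪y i, x - b i⟫) (convexHull ℝ (Set.range b)) := by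
    fun_prop
  obtain ⟨C, hC⟩ := hc.bddBelow_image hcont
  refine ⟨C, fun x hx => (hC (Set.mem_image_of_mem _ hx)).trans ?_⟩
  exact le_ciSup (f := fun i => z i + ⟪y i, x - b i⟫) (Set.finite_range _).bddAbove i

theorem upper_aux {n N : ℕ} (g : EuclideanSpace ℝ (Fin n) → ℝ) (hg : ConvexOn ℝ Set.univ g)
    (b : Fin N → EuclideanSpace ℝ (Fin n)) (z : Fin N → ℝ) (hz : ∀ i, z i = g (b i))
    (x : EuclideanSpace ℝ (Fin n)) (hx : x ∈ convexHull ℝ (Set.range b)) :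
    g x ≤ upperEnvelope b z x ∧ upperEnvelope b z x ≤ ∑ i, |z i| := by
  obtain ⟨lam, h0, h1, h2⟩ := exists_weights_aux b x hx
  have key : g x ∈ lowerBounds {r | ∃ lam : Fin N → ℝ, (∀ i, 0 ≤ lam i) ∧ (∑ i, lam i) = 1 ∧
      (∑ i, lam i • b i) = x ∧ r = ∑ i, lam i * z i} := by
    rintro r ⟨l, hl, hl1, rfl, rfl⟩
    have := hg.map_sum_le (t := Finset.univ) (w := l) (p := b) (fun i _ => hl i) hl1 (by simp)
    simpa [hz] using this
  refine ⟨le_csInf ⟨_, lam, h0, h1, h2, rfl⟩ key, ?_⟩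
  refine (csInf_le ⟨_, key⟩ ⟨lam, h0, h1, h2, rfl⟩).trans (Finset.sum_le_sum fun i _ => ?_)
  have hl : lam i ≤ 1 := h1 ▸ Finset.single_le_sum (fun j _ => h0 j) (Finset.mem_univ i)
  calc lam i * z i ≤ lam i * |z i| := mul_le_mul_of_nonneg_left (le_abs_self _) (h0 i)
    _ ≤ |z i| := mul_le_of_le_one_left (abs_nonneg _) hl

/-- **Theorem 1 of the paper** (generalization bound for arbitrary ICNNs).
Given the values `z̃ᵢ = f(bᵢ)`, `zᵢ = Φ(bᵢ)` and subgradients `ỹᵢ` of `f` and `yᵢ` of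
`Φ` at the data points, the constant
`M = sup_{x ∈ B} max (f̂ x − Φ̌ x) (Φ̂ x − f̌ x)` — which depends only on the data —
is finite (the supremand is bounded above on `B`) and bounds `|f − Φ|` on
`B = conv{b₁, …, b_N}`. -/
theorem icnn_generalization_bound_general
    {n N : ℕ}
    (Φ f : EuclideanSpace ℝ (Fin n) → ℝ)
    (hΦ : ConvexOn ℝ Set.univ Φ) (hf : ConvexOn ℝ Set.univ f)
    (b : Fin N → EuclideanSpace ℝ (Fin n))
    (z zt : Fin N → ℝ) (hz : ∀ i, z i = Φ (b i)) (hzt : ∀ i, zt i = f (b i))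
    (y yt : Fin N → EuclideanSpace ℝ (Fin n))
    (hy : ∀ i, ∀ b' : EuclideanSpace ℝ (Fin n), Φ (b i) + ⟪y i, b' - b i⟫ ≤ Φ b')
    (hyt : ∀ i, ∀ b' : EuclideanSpace ℝ (Fin n), f (b i) + ⟪yt i, b' - b i⟫ ≤ f b') :
    BddAbove ((fun x => max (upperEnvelope b zt x - lowerEnvelope b y z x)
        (upperEnvelope b z x - lowerEnvelope b yt zt x)) ''
        convexHull ℝ (Set.range b)) ∧
    ∀ x ∈ convexHull ℝ (Set.range b),
      |f x - Φ x| ≤ sSup ((fun x => max (upperEnvelope b zt x - lowerEnvelope b y z x)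
        (upperEnvelope b z x - lowerEnvelope b yt zt x)) ''
        convexHull ℝ (Set.range b)) := by
  have hne : ∀ x ∈ convexHull ℝ (Set.range b), Nonempty (Fin N) := fun x hx =>
    Set.range_nonempty_iff_nonempty.1 (convexHull_nonempty_iff.1 ⟨x, hx⟩)
  have hbdd : BddAbove ((fun x => max (upperEnvelope b zt x - lowerEnvelope b y z x)
        (upperEnvelope b z x - lowerEnvelope b yt zt x)) ''
        convexHull ℝ (Set.range b)) := by
    rcases isEmpty_or_nonempty (Fin N) with hN | hN
    · refine ⟨0, ?_⟩
      rintro _ ⟨x, hx, rfl⟩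
      exact (hN.false (hne x hx).some).elim
    · obtain ⟨C, hC⟩ := le_lower_aux b y z
      obtain ⟨D, hD⟩ := le_lower_aux b yt zt
      refine ⟨max ((∑ i, |zt i|) - C) ((∑ i, |z i|) - D), ?_⟩
      rintro _ ⟨x, hx, rfl⟩
      exact max_le_max (sub_le_sub (upper_aux f hf b zt hzt x hx).2 (hC x hx))
        (sub_le_sub (upper_aux Φ hΦ b z hz x hx).2 (hD x hx))
  refine ⟨hbdd, fun x hx => ?_⟩
  have := hne x hx
  refine le_trans ?_ (le_csSup hbdd (Set.mem_image_of_mem _ hx))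
  have h1 := (upper_aux f hf b zt hzt x hx).1
  have h2 := (upper_aux Φ hΦ b z hz x hx).1
  have h3 := lower_le_aux Φ b y z hz hy x
  have h4 := lower_le_aux f b yt zt hzt hyt x
  refine abs_le'.2 ⟨le_max_of_le_left (by linarith), le_max_of_le_right (by linarith)⟩
end
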